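/- Let X be a finite non-degenerate indecomposable cycle set with |X| = p² for a prime number p. Then X is a simple cycle set if and only if the displacement group Dis(X) acts transitively on X. -/

import Mathlib

/-!
If `X` is simple, the orbits of `Dis(X)` form a quotient cycle set, so `Dis(X)` is transitive or
trivial. If it is trivial, all `σ_x` are equal to one permutation `s` generating a regular cyclic
group of order `p²`, and the orbits of `s ^ p` form a quotient with `p` elements
(`simple_dichotomy`, applied twice).

Conversely, the size of an epimorphic image `Y` divides `p²`, and transitivity of the displacement
group passes to `Y`, so it suffices that no cycle set of prime order has a transitive displacement
group (`not_transitive_Dis_of_prime`). This follows Etingof, Schedler and Soloviev. For any finite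
cycle set, `G(X)` carries an abelian group structure `A` on which it acts by automorphisms,
generated by the elements `[x]` corresponding to `σ_x`; it is obtained from the map `psi` on
multisets. When `|X| = p`, write `|A| = |G(X)| = p m` with `p ∤ m`; the elements `m [x]` form an
orbit of nonzero elements of `m A ≅ ℤ/p`, whose size divides `p` and is less than `p`. Hence they
coincide, and there is a homomorphism `G(X) → ℤ/p` sending every `σ_x` to `1`. Its kernel
contains `Dis(X)`; if `Dis(X)` were transitive, `p²` would divide `|G(X)|`, hence `p!`.
-/

/-- A cycle set: each left multiplication `σ_x = op x` is bijective and
`(x·y)·(x·z) = (y·x)·(y·z)`. -/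
structure CycleSet (X : Type) where
  op : X → X → X
  bij : ∀ x, Function.Bijective (op x)
  cyc : ∀ x y z, op (op x y) (op x z) = op (op y x) (op y z)

namespace CycleSet

variable {X Y : Type}

/-- The left multiplication `σ_x` as a permutation of `X`. -/
noncomputable def sigma (C : CycleSet X) (x : X) : Equiv.Perm X :=
  Equiv.ofBijective _ (C.bij x)

/-- Non-degeneracy: the squaring map `x ↦ x·x` is bijective. -/
def Nondeg (C : CycleSet X) : Prop := Function.Bijective fun x => C.op x x

/-- The associated permutation group `G(X)`, generated by the `σ_x`. -/
noncomputable def G (C : CycleSet X) : Subgroup (Equiv.Perm X) :=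
  Subgroup.closure (Set.range C.sigma)

/-- The displacement group `Dis(X)`, generated by the `σ_x σ_y⁻¹`. -/
noncomputable def Dis (C : CycleSet X) : Subgroup (Equiv.Perm X) :=
  Subgroup.closure {g | ∃ x y, g = C.sigma x * (C.sigma y)⁻¹}

/-- A subgroup of `Sym(X)` acts transitively on `X`. -/
def SubgroupTransitive (H : Subgroup (Equiv.Perm X)) : Prop :=
  ∀ a b : X, ∃ g ∈ H, g a = b

/-- Indecomposability: `G(X)` acts transitively on `X`. -/
def Indec (C : CycleSet X) : Prop := SubgroupTransitive C.G

/-- A trivial cycle set: all left multiplications coincide. -/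
def IsTrivial (C : CycleSet X) : Prop := ∀ x y z, C.op x z = C.op y z

/-- Cycle set homomorphism. -/
def IsHom (C : CycleSet X) (D : CycleSet Y) (f : X → Y) : Prop :=
  ∀ a b : X, f (C.op a b) = D.op (f a) (f b)

/-- A block for the action of `G(X)` on `X`. -/
def IsBlock (C : CycleSet X) (s : Set X) : Prop :=
  ∀ g ∈ C.G, (⇑g '' s = s ∨ Disjoint (⇑g '' s) s)

/-- Primitivity: `G(X)` acts transitively on `X` and all blocks are trivial. -/
def Primitive (C : CycleSet X) : Prop :=
  C.Indec ∧ ∀ s : Set X, C.IsBlock s → s.Subsingleton ∨ s = Set.univ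

/-- There is a chain `X = X₁ → X₂ → ⋯ → X_k` of epimorphisms of cycle sets with
`|X_i| > |X_{i+1}| > 1` for `1 ≤ i ≤ k-1` and with `X_k` primitive. -/
def HasChain [Finite X] (C : CycleSet X) (k : ℕ) : Prop :=
  ∃ (T : ℕ → Type) (_ : ∀ i, Finite (T i)) (CS : ∀ i, CycleSet (T i)) (e : X → T 0),
    Function.Bijective e ∧ IsHom C (CS 0) e ∧
    (∀ i, i + 1 < k → Nat.card (T (i + 1)) < Nat.card (T i) ∧ 1 < Nat.card (T (i + 1))) ∧
    (∀ i, i + 1 < k → ∃ p : T i → T (i + 1),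
      Function.Surjective p ∧ IsHom (CS i) (CS (i + 1)) p) ∧
    (CS (k - 1)).Primitive

/-- `X` has finite primitive level: some chain as above exists (of positive length). -/
def HasFPL [Finite X] (C : CycleSet X) : Prop := ∃ k, 1 ≤ k ∧ HasChain C k

/-- `fpl(X) = k`: `k` is the largest positive integer admitting a chain as above. -/
def fplEq [Finite X] (C : CycleSet X) (k : ℕ) : Prop :=
  1 ≤ k ∧ HasChain C k ∧ ∀ m, 1 ≤ m → HasChain C m → m ≤ k

end CycleSet

open CycleSet

/-- A simple cycle set: every epimorphic image is a singleton or isomorphic to `X`. -/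
def IsSimpleCS {X : Type} [Finite X] (C : CycleSet X) : Prop :=
  ∀ (Y : Type) (D : CycleSet Y) (f : X → Y), Function.Surjective f → IsHom C D f →
    (Nat.card Y = 1 ∨ ∃ e : X → Y, Function.Bijective e ∧ IsHom C D e)


/-! ### Transitive permutation groups -/

namespace CycleSet

/-- The fibres of a map whose kernel relation is invariant under a transitive group all have the
same size. -/
theorem card_dvd_of_block {X Y : Type} [Finite X] {H : Subgroup (Equiv.Perm X)}
    (hH : SubgroupTransitive H) {f : X → Y} (hf : Function.Surjective f)
    (hblock : ∀ g ∈ H, ∀ x y, f x = f y → f (g x) = f (g y)) :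
    Nat.card Y ∣ Nat.card X := by
  rcases isEmpty_or_nonempty X with hX | ⟨⟨x₀⟩⟩
  · have : IsEmpty Y := ⟨fun y => hX.elim (hf y).choose⟩
    simp
  have key : ∀ y : Y, Nonempty ({x // f x = y} ≃ {x // f x = f x₀}) := by
    intro y
    obtain ⟨x, rfl⟩ := hf y
    obtain ⟨g, hg, rfl⟩ := hH x₀ x
    refine ⟨(g⁻¹).subtypeEquiv fun z => ⟨fun h => ?_, fun h => ?_⟩⟩
    · simpa using hblock _ (H.inv_mem hg) _ _ h
    · simpa using hblock _ hg _ _ h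
  have e : X ≃ Y × {x // f x = f x₀} :=
    (Equiv.sigmaFiberEquiv f).symm.trans
      ((Equiv.sigmaCongrRight fun y => (key y).some).trans (Equiv.sigmaEquivProd _ _))
  rw [Nat.card_congr e, Nat.card_prod]
  exact dvd_mul_right _ _

theorem card_dvd_card_of_transitive {X : Type} [Finite X] [Nonempty X]
    {H : Subgroup (Equiv.Perm X)} (hH : SubgroupTransitive H) : Nat.card X ∣ Nat.card H := by
  have : MulAction.IsPretransitive H X :=
    ⟨fun a b => by obtain ⟨g, hg, h⟩ := hH a b; exact ⟨⟨g, hg⟩, h⟩⟩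
  rw [← MulAction.index_stabilizer_of_transitive H (Classical.arbitrary X)]
  exact Subgroup.index_dvd_card _

/-! ### The additive structure of the permutation group -/

variable {X : Type} (C : CycleSet X)

@[simp] theorem sigma_apply (x y : X) : C.sigma x y = C.op x y := rfl

theorem sigma_mem (x : X) : C.sigma x ∈ C.G := Subgroup.subset_closure ⟨x, rfl⟩

/-- The cycle set equation in terms of permutations. -/
theorem sigma_mul_sigma (x y : X) :
    C.sigma (C.op x y) * C.sigma x = C.sigma (C.op y x) * C.sigma y := by
  ext z
  exact C.cyc x y z

instance psi_rightCommutative :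
    RightCommutative fun (g : Equiv.Perm X) (x : X) => C.sigma (g x) * g :=
  ⟨fun g x y => by
    have := C.sigma_mul_sigma (g x) (g y)
    simp only [Equiv.Perm.mul_apply, sigma_apply]
    rw [← mul_assoc, this, mul_assoc]⟩

/-- `C.psiFrom g {x₁, …, xₙ}` multiplies `g` on the left successively by the `σ` of the current
image of `xᵢ`. -/
noncomputable def psiFrom (g : Equiv.Perm X) (a : Multiset X) : Equiv.Perm X :=
  a.foldl (fun (g : Equiv.Perm X) (x : X) => C.sigma (g x) * g) g

/-- The map from the free commutative monoid on `X` to the symmetric group with `ψ {x} = σ_x` and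
`ψ (a + b) = ψ (ψ(a) • b) ψ(a)`: the inverse of a `1`-cocycle. It transports an addition to
`G(X)`. -/
noncomputable def psi (a : Multiset X) : Equiv.Perm X := C.psiFrom 1 a

theorem psiFrom_mul (h g : Equiv.Perm X) (a : Multiset X) :
    C.psiFrom (h * g) a = C.psiFrom h (a.map g) * g := by
  induction a using Multiset.induction generalizing h with
  | empty => simp [psiFrom]
  | cons x a ih =>
    have := ih (C.sigma (h (g x)) * h)
    simp only [psiFrom, Multiset.foldl_cons, Multiset.map_cons, Equiv.Perm.mul_apply] at this ⊢
    rw [← this, mul_assoc]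

@[simp] theorem psi_zero : C.psi 0 = 1 := rfl

@[simp] theorem psi_singleton (x : X) : C.psi {x} = C.sigma x := by
  simp [psi, psiFrom, ← Multiset.cons_zero]

theorem psi_add (a b : Multiset X) : C.psi (a + b) = C.psi (b.map (C.psi a)) * C.psi a := by
  rw [psi, psi, ← psiFrom_mul, one_mul, psi]
  exact Multiset.foldl_add _ _ _ _

theorem psi_mem (a : Multiset X) : C.psi a ∈ C.G := by
  have key : ∀ g ∈ C.G, C.psiFrom g a ∈ C.G := by
    induction a using Multiset.induction with
    | empty => exact fun g hg => hg
    | cons x a ih =>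
      intro g hg
      have := ih _ (C.G.mul_mem (C.sigma_mem (g x)) hg)
      simpa [psiFrom] using this
  exact key 1 C.G.one_mem

/-- In the finite case `G(X)` is generated by the `σ_x` as a monoid. -/
theorem G_induction [Finite X] {P : Equiv.Perm X → Prop} (one : P 1)
    (mul : ∀ g h, P g → P h → P (g * h)) (sig : ∀ x, P (C.sigma x)) :
    ∀ g ∈ C.G, P g := by
  intro g hg
  rw [G, ← Subgroup.mem_toSubmonoid, Subgroup.closure_toSubmonoid_of_finite] at hg
  induction hg using Submonoid.closure_induction with
  | mem _ h => obtain ⟨x, rfl⟩ := h; exact sig x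
  | one => exact one
  | mul g h _ _ h1 h2 => exact mul g h h1 h2

theorem psi_surj [Finite X] : ∀ g ∈ C.G, ∃ a, C.psi a = g := by
  refine C.G_induction ⟨0, rfl⟩ ?_ fun x => ⟨{x}, C.psi_singleton x⟩
  rintro _ _ ⟨a, rfl⟩ ⟨b, rfl⟩
  refine ⟨b + a.map ⇑(C.psi b)⁻¹, ?_⟩
  rw [psi_add, Multiset.map_map]
  simp

theorem psi_add_congr {a b : Multiset X} (h : C.psi a = C.psi b) (c : Multiset X) :
    C.psi (a + c) = C.psi (b + c) := by
  rw [psi_add, psi_add, h]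

/-- The kernel relation of `ψ` is `G(X)`-invariant: for `g = σ_x` compare
`ψ ({x} + a) = ψ ({x} + b)`. -/
theorem psi_map_congr [Finite X] {g : Equiv.Perm X} (hg : g ∈ C.G) :
    ∀ {a b : Multiset X}, C.psi a = C.psi b → C.psi (a.map g) = C.psi (b.map g) := by
  refine C.G_induction (P := fun g => ∀ {a b : Multiset X}, C.psi a = C.psi b →
    C.psi (a.map g) = C.psi (b.map g)) ?_ ?_ ?_ g hg
  · intro a b h
    simpa using h
  · intro g h hg hh a b hab
    have := hg (hh hab)
    simpa [Multiset.map_map] using this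
  · intro x a b h
    have h1 := C.psi_add_congr h {x}
    rw [add_comm, psi_add, add_comm b, psi_add] at h1
    simpa using h1

theorem psi_add_cancel [Finite X] {a b c : Multiset X} (h : C.psi (c + a) = C.psi (c + b)) :
    C.psi a = C.psi b := by
  rw [psi_add, psi_add] at h
  have := C.psi_map_congr (C.G.inv_mem (C.psi_mem c)) (mul_right_cancel h)
  simpa [Multiset.map_map] using this

/-- The kernel relation of `ψ`, a congruence on the free commutative monoid. -/
def con : AddCon (Multiset X) where
  r a b := C.psi a = C.psi b
  iseqv := ⟨fun _ => rfl, fun h => h.symm, fun h h' => h.trans h'⟩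
  add' {a b c d} h h' := by
    have h1 := C.psi_add_congr h c
    have h2 := C.psi_add_congr h' b
    rw [add_comm c, add_comm d] at h2
    exact h1.trans h2

/-- The additive group of the brace `G(X)`, as a quotient of the free commutative monoid. -/
abbrev A : Type := C.con.Quotient

/-- The class of a multiset in the additive group. -/
def toA (a : Multiset X) : C.A := (a : C.con.Quotient)

theorem toA_eq {a b : Multiset X} : C.toA a = C.toA b ↔ C.psi a = C.psi b := AddCon.eq _

theorem toA_surj : Function.Surjective C.toA := Quotient.mk''_surjective

theorem toA_add (a b : Multiset X) : C.toA (a + b) = C.toA a + C.toA b := rfl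

theorem toA_nsmul (n : ℕ) (a : Multiset X) : C.toA (n • a) = n • C.toA a := rfl

theorem toA_zero : C.toA 0 = 0 := rfl

/-- `ψ` identifies the additive group with `G(X)` as sets. -/
noncomputable def equivG [Finite X] : C.A ≃ C.G :=
  Equiv.ofBijective (fun q => Quotient.liftOn' q (fun a => (⟨C.psi a, C.psi_mem a⟩ : C.G))
    fun a b h => Subtype.ext h) <| by
    constructor
    · intro q r h
      obtain ⟨a, rfl⟩ := C.toA_surj q
      obtain ⟨b, rfl⟩ := C.toA_surj r
      exact C.toA_eq.2 (congrArg Subtype.val h)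
    · rintro ⟨g, hg⟩
      obtain ⟨a, rfl⟩ := C.psi_surj g hg
      exact ⟨C.toA a, rfl⟩

instance [Finite X] : Finite C.A := Finite.of_equiv _ C.equivG.symm

theorem exists_neg [Finite X] (q : C.A) : ∃ r, r + q = 0 := by
  have hinj : Function.Injective fun r : C.A => r + q := by
    intro r s h
    obtain ⟨a, rfl⟩ := C.toA_surj r
    obtain ⟨b, rfl⟩ := C.toA_surj s
    obtain ⟨c, rfl⟩ := C.toA_surj q
    simp only [← toA_add, toA_eq, add_comm _ c] at h
    exact C.toA_eq.2 (C.psi_add_cancel h)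
  exact (Finite.injective_iff_surjective.1 hinj) 0

noncomputable instance [Finite X] : Neg C.A := ⟨fun q => (C.exists_neg q).choose⟩

noncomputable instance [Finite X] : AddCommGroup C.A where
  zsmul := zsmulRec
  neg_add_cancel q := (C.exists_neg q).choose_spec

end CycleSet

/-! ### Cycle sets of prime order -/

/-- If `p` divides `|A|` exactly once, multiplication by the cofactor has image of size at
most `p`. -/
theorem card_range_nsmul_le {A : Type} [AddCommGroup A] [Finite A] {p m : ℕ} (hp : p.Prime)
    (hcard : Nat.card A = p * m) (hm : ¬ p ∣ m) :
    Nat.card (nsmulAddMonoidHom (α := A) m).range ≤ p := by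
  have : Fact p.Prime := ⟨hp⟩
  set V := (nsmulAddMonoidHom (α := A) m).range
  have htors : ∀ v : V, p • v = 0 := by
    rintro ⟨_, a, rfl⟩
    ext
    simp [← mul_nsmul', ← hcard]
  let _ : Module (ZMod p) V := AddCommGroup.zmodModule htors
  have hk : Nat.card V = p ^ Module.finrank (ZMod p) V :=
    (FiniteField.pow_finrank_eq_natCard p V).symm
  have hdvd : Nat.card V ∣ p * m := hcard ▸ AddSubgroup.card_addSubgroup_dvd_card V
  rw [hk] at hdvd ⊢
  by_contra! hlt
  have h2 : 2 ≤ Module.finrank (ZMod p) V := by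
    by_contra! h
    exact absurd hlt (not_lt.2 ((Nat.pow_le_pow_right hp.pos (Nat.lt_succ_iff.1 h)).trans
      (pow_one p).le))
  have := (pow_dvd_pow p h2).trans hdvd
  rw [pow_two] at this
  exact hm (Nat.dvd_of_mul_dvd_mul_left hp.pos this)

theorem exists_nsmul_ne_zero {A : Type} [AddCommGroup A] [Finite A] {p m : ℕ} (hp : p.Prime)
    (hcard : Nat.card A = p * m) (hm : ¬ p ∣ m) : ∃ a : A, m • a ≠ 0 := by
  have : Fact p.Prime := ⟨hp⟩
  let _ := Fintype.ofFinite A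
  obtain ⟨a, ha⟩ := exists_prime_addOrderOf_dvd_card (G := A) p
    (by rw [← Nat.card_eq_fintype_card, hcard]; exact dvd_mul_right _ _)
  refine ⟨a, fun h => hm ?_⟩
  rw [← ha]
  exact addOrderOf_dvd_of_nsmul_eq_zero h

namespace CycleSet

theorem Dis_le_G {X : Type} (C : CycleSet X) : C.Dis ≤ C.G := by
  rw [Dis, Subgroup.closure_le]
  rintro _ ⟨x, y, rfl⟩
  exact C.G.mul_mem (C.sigma_mem x) (C.G.inv_mem (C.sigma_mem y))

theorem not_sq_dvd_card_perm {X : Type} [Finite X] {p : ℕ} (hp : p.Prime)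
    (hcard : Nat.card X = p) (H : Subgroup (Equiv.Perm X)) : ¬ p * p ∣ Nat.card H := by
  intro h
  have h1 := h.trans (Subgroup.card_subgroup_dvd_card H)
  rw [Nat.card_perm, hcard, ← Nat.mul_factorial_pred hp.ne_zero] at h1
  have := (hp.dvd_factorial).1 (Nat.dvd_of_mul_dvd_mul_left hp.pos h1)
  have := hp.pos
  omega

/-- For an indecomposable cycle set of prime order `p`, the size of `a` modulo `p` depends only on
`ψ a`. Indeed, if `|A| = p m`, then `m A` has order `p` and the equivariant map
`x ↦ m [x]` takes values in `m A \ {0}`, a set with fewer than `p` elements, hence is constant. -/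
theorem card_modEq_of_psi_eq {X : Type} [Finite X] (C : CycleSet X) (hind : C.Indec)
    {p : ℕ} (hp : p.Prime) (hcard : Nat.card X = p) {a b : Multiset X}
    (h : C.psi a = C.psi b) : Multiset.card a ≡ Multiset.card b [MOD p] := by
  have hX : Nonempty X := (Nat.card_pos_iff.1 (hcard ▸ hp.pos)).1
  obtain ⟨m, hm⟩ : p ∣ Nat.card C.G := hcard ▸ card_dvd_card_of_transitive hind
  have hpm : ¬ p ∣ m := fun hd => not_sq_dvd_card_perm hp hcard C.G
    (hm ▸ Nat.mul_dvd_mul_left p hd)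
  have hA : Nat.card C.A = p * m := (Nat.card_congr C.equivG).trans hm
  let f : X → C.A := fun x => m • C.toA {x}
  have hadd : ∀ a : Multiset X, m • C.toA a = (a.map f).sum := by
    intro a
    induction a using Multiset.induction with
    | empty => simp [toA_zero]
    | cons x a ih =>
      rw [← Multiset.singleton_add, toA_add, smul_add, ih]
      simp [f]
  have hblock : ∀ g ∈ C.G, ∀ x y, f x = f y → f (g x) = f (g y) := by
    intro g hg x y hxy
    have := C.psi_map_congr hg (C.toA_eq.1 (show C.toA (m • {x}) = C.toA (m • {y}) from hxy))
    rw [← toA_eq, Multiset.map_nsmul, Multiset.map_nsmul] at this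
    simpa [toA_nsmul, f] using this
  have hne : ∀ x, f x ≠ 0 := by
    intro x hx
    have hall : ∀ y, f y = 0 := by
      intro y
      obtain ⟨g, hg, rfl⟩ := hind x y
      have := C.psi_map_congr hg (C.toA_eq.1 (show C.toA (m • {x}) = C.toA 0 from hx))
      rw [← toA_eq, Multiset.map_nsmul] at this
      simpa [toA_nsmul, toA_zero, f] using this
    obtain ⟨q, hq⟩ := exists_nsmul_ne_zero hp hA hpm
    obtain ⟨a, rfl⟩ := C.toA_surj q
    refine hq ?_
    rw [hadd]
    exact Multiset.sum_eq_zero fun y hy => by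
      obtain ⟨x, -, rfl⟩ := Multiset.mem_map.1 hy
      exact hall x
  have hlt : Nat.card (Set.range f) < p := by
    refine lt_of_lt_of_le ?_ (card_range_nsmul_le hp hA hpm)
    rw [Nat.card_coe_set_eq]
    refine Set.ncard_lt_ncard (t := ((nsmulAddMonoidHom (α := C.A) m).range : Set C.A)) ?_
      (Set.toFinite _)
    refine (Set.ssubset_iff_of_subset ?_).2 ⟨0, zero_mem _, ?_⟩
    · rintro _ ⟨x, rfl⟩
      exact ⟨C.toA {x}, rfl⟩
    · rintro ⟨x, hx⟩
      exact hne x hx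
  have hdvd : Nat.card (Set.range f) ∣ Nat.card X :=
    card_dvd_of_block hind (Set.rangeFactorization_surjective (f := f))
      fun g hg x y hxy => Subtype.ext (hblock g hg x y (congrArg Subtype.val hxy))
  have hone : Nat.card (Set.range f) = 1 :=
    ((Nat.dvd_prime hp).1 (hcard ▸ hdvd)).resolve_right hlt.ne
  have hconst : ∀ x y, f x = f y := by
    intro x y
    have := (Nat.card_eq_one_iff_unique.1 hone).1
    exact congrArg Subtype.val (Subsingleton.elim (⟨f x, x, rfl⟩ : Set.range f) ⟨f y, y, rfl⟩)
  obtain ⟨x₀⟩ := hX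
  have hcardsum : ∀ a : Multiset X, m • C.toA a = Multiset.card a • f x₀ := by
    intro a
    rw [hadd, Multiset.map_congr rfl fun x _ => hconst x x₀, Multiset.map_const',
      Multiset.sum_replicate]
  have hord : addOrderOf (f x₀) = p := by
    have : Fact p.Prime := ⟨hp⟩
    refine addOrderOf_eq_prime ?_ (hne x₀)
    rw [← mul_nsmul', ← hA, card_nsmul_eq_zero']
  have hfin := hcardsum a
  rw [C.toA_eq.2 h, hcardsum b] at hfin
  rw [← hord]
  exact nsmul_eq_nsmul_iff_modEq.1 hfin.symm

/-- The displacement group of a cycle set of prime order `p` is never transitive: it lies in the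
kernel of an epimorphism from `G(X)` onto `ℤ/p`, and `p²` does not divide `p!`. -/
theorem not_transitive_Dis_of_prime {X : Type} [Finite X] (C : CycleSet X)
    {p : ℕ} (hp : p.Prime) (hcard : Nat.card X = p) : ¬ SubgroupTransitive C.Dis := by
  intro hD
  have hX : Nonempty X := (Nat.card_pos_iff.1 (hcard ▸ hp.pos)).1
  have hind : C.Indec := fun a b => by
    obtain ⟨g, hg, h⟩ := hD a b
    exact ⟨g, C.Dis_le_G hg, h⟩
  choose c hc using fun g : C.G => C.psi_surj g.1 g.2
  have hc' : ∀ (g : C.G) (a : Multiset X), C.psi a = g →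
      ((Multiset.card (c g) : ℕ) : ZMod p) = (Multiset.card a : ℕ) := fun g a h =>
    (ZMod.natCast_eq_natCast_iff _ _ _).2
      (C.card_modEq_of_psi_eq hind hp hcard ((hc g).trans h.symm))
  let L : C.G →* Multiplicative (ZMod p) := MonoidHom.mk'
    (fun g => Multiplicative.ofAdd ((Multiset.card (c g) : ℕ) : ZMod p)) <| by
    intro g h
    rw [← ofAdd_add, hc' (g * h) (c h + (c g).map ⇑(C.psi (c h))⁻¹)]
    · simp [add_comm]
    · rw [psi_add, Multiset.map_map]
      simp [hc]
  have hL : ∀ x, L ⟨C.sigma x, C.sigma_mem x⟩ = Multiplicative.ofAdd 1 := fun x => by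
    have := hc' ⟨C.sigma x, C.sigma_mem x⟩ {x} (C.psi_singleton x)
    rw [Multiset.card_singleton, Nat.cast_one] at this
    exact congrArg Multiplicative.ofAdd this
  have hle : C.Dis ≤ L.ker.map C.G.subtype := by
    rw [Dis, Subgroup.closure_le]
    rintro _ ⟨x, y, rfl⟩
    refine ⟨⟨C.sigma x, C.sigma_mem x⟩ * ⟨C.sigma y, C.sigma_mem y⟩⁻¹, ?_, rfl⟩
    simp only [SetLike.mem_coe, MonoidHom.mem_ker, map_mul, map_inv, hL]
    simp
  have hker : p ∣ Nat.card L.ker := by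
    have h1 : SubgroupTransitive (L.ker.map C.G.subtype) := fun a b => by
      obtain ⟨g, hg, h⟩ := hD a b
      exact ⟨g, hle hg, h⟩
    have h2 := card_dvd_card_of_transitive h1
    rwa [hcard, Subgroup.card_map_of_injective C.G.subtype_injective] at h2
  have hidx : L.ker.index = p := by
    have : NeZero p := ⟨hp.ne_zero⟩
    obtain ⟨x⟩ := hX
    have hsurj : Function.Surjective L := by
      intro z
      refine ⟨⟨C.sigma x, C.sigma_mem x⟩ ^ (Multiplicative.toAdd z).val, ?_⟩
      rw [map_pow, hL, ← ofAdd_nsmul]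
      simp
    rw [Subgroup.index_ker, MonoidHom.range_eq_top.2 hsurj, Subgroup.card_top]
    exact Nat.card_zmod p
  refine not_sq_dvd_card_perm hp hcard C.G ?_
  rw [← L.ker.card_mul_index, hidx]
  exact Nat.mul_dvd_mul_right hker p

/-! ### Quotients by orbits -/

/-- The orbit relation of a group of permutations. -/
def orbitSetoid {X : Type} (H : Subgroup (Equiv.Perm X)) : Setoid X where
  r a b := ∃ g ∈ H, g a = b
  iseqv := ⟨fun _ => ⟨1, H.one_mem, rfl⟩,
    fun {a b} ⟨g, hg, h⟩ => ⟨g⁻¹, H.inv_mem hg, by simp [← h]⟩,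
    fun {a b c} ⟨g, hg, h⟩ ⟨g', hg', h'⟩ => ⟨g' * g, H.mul_mem hg' hg, by simp [h, h']⟩⟩

/-- The orbits of a group that is stable under conjugation by the `σ_a` and contains the
displacements form a cycle set in which `[a]·[b] = [a·b]` depends on `[b]` only. -/
noncomputable def quot {X : Type} [Finite X] (C : CycleSet X) (H : Subgroup (Equiv.Perm X))
    (hconj : ∀ a, ∀ g ∈ H, C.sigma a * g * (C.sigma a)⁻¹ ∈ H)
    (hdis : C.Dis ≤ H) : CycleSet (Quotient (orbitSetoid H)) where
  op := Quotient.map₂ C.op <| by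
    rintro a a' - b b' ⟨g, hg, rfl⟩
    refine ⟨C.sigma a' * (C.sigma a)⁻¹ * (C.sigma a * g * (C.sigma a)⁻¹),
      H.mul_mem (hdis (Subgroup.subset_closure ⟨a', a, rfl⟩)) (hconj a g hg), ?_⟩
    have : (C.sigma a)⁻¹ (C.op a b) = b := by
      rw [Equiv.Perm.inv_eq_iff_eq]; rfl
    rw [Equiv.Perm.mul_apply, Equiv.Perm.mul_apply, Equiv.Perm.mul_apply, Equiv.Perm.mul_apply,
      this, ← sigma_apply, ← Equiv.Perm.mul_apply (C.sigma a)⁻¹, inv_mul_cancel]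
    rfl
  bij q := by
    refine Function.Surjective.bijective_of_finite fun r => ?_
    induction q using Quotient.inductionOn with | _ a
    induction r using Quotient.inductionOn with | _ b
    obtain ⟨c, rfl⟩ := (C.bij a).2 b
    exact ⟨⟦c⟧, rfl⟩
  cyc q r s := by
    induction q using Quotient.inductionOn with | _ a
    induction r using Quotient.inductionOn with | _ b
    induction s using Quotient.inductionOn with | _ c
    exact congrArg _ (C.cyc a b c)

/-- Over a simple cycle set the orbit quotient is either a point or `X` itself. -/
theorem simple_dichotomy {X : Type} [Finite X] {C : CycleSet X} (hs : IsSimpleCS C)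
    (H : Subgroup (Equiv.Perm X))
    (hconj : ∀ a, ∀ g ∈ H, C.sigma a * g * (C.sigma a)⁻¹ ∈ H) (hdis : C.Dis ≤ H) :
    SubgroupTransitive H ∨ ∀ g ∈ H, g = 1 := by
  have hsurj : Function.Surjective (Quotient.mk (orbitSetoid H)) := Quotient.mk_surjective
  rcases hs _ (C.quot H hconj hdis) (Quotient.mk _) hsurj fun _ _ => rfl with h1 | ⟨e, he, -⟩
  · left
    intro a b
    have := (Nat.card_eq_one_iff_unique.1 h1).1
    exact Quotient.exact (Subsingleton.elim (Quotient.mk (orbitSetoid H) a) ⟦b⟧)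
  · right
    have hinj := (hsurj.bijective_of_nat_card_le (Nat.card_eq_of_bijective e he).le).1
    intro g hg
    ext x
    exact (hinj (Quotient.sound ⟨g, hg, rfl⟩)).symm

/-- `Dis(X)` is stable under conjugation by `σ_a`, since the cycle set equation gives
`σ_x σ_y⁻¹ = σ_{x·y}⁻¹ σ_{y·x}`. -/
theorem Dis_conj {X : Type} (C : CycleSet X) (a : X) :
    ∀ g ∈ C.Dis, C.sigma a * g * (C.sigma a)⁻¹ ∈ C.Dis := by
  have hgen : ∀ x y, C.sigma x * (C.sigma y)⁻¹ ∈ C.Dis := fun x y =>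
    Subgroup.subset_closure ⟨x, y, rfl⟩
  have : C.Dis ≤ C.Dis.comap (MulAut.conj (C.sigma a)).toMonoidHom := by
    conv_lhs => rw [Dis]
    rw [Subgroup.closure_le]
    rintro _ ⟨x, y, rfl⟩
    have h : C.sigma x * (C.sigma y)⁻¹ = (C.sigma (C.op x y))⁻¹ * C.sigma (C.op y x) := by
      rw [mul_inv_eq_iff_eq_mul, mul_assoc, ← C.sigma_mul_sigma x y, inv_mul_cancel_left]
    have h2 := C.Dis.mul_mem (hgen a (C.op x y)) (hgen (C.op y x) a)
    simpa [h, mul_assoc] using h2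
  exact fun g hg => this hg

/-! ### Cycle sets of order `p²` -/

/-- A map of sets compatible with generators is compatible with the groups they generate. -/
theorem exists_induced {X Y : Type} {f : X → Y} {S : Set (Equiv.Perm X)} {T : Set (Equiv.Perm Y)}
    (hST : ∀ g ∈ S, ∃ g' ∈ T, ∀ x, f (g x) = g' (f x)) :
    ∀ g ∈ Subgroup.closure S, ∃ g' ∈ Subgroup.closure T, ∀ x, f (g x) = g' (f x) := by
  intro g hg
  induction hg using Subgroup.closure_induction with
  | mem g hg =>
    obtain ⟨g', h, h'⟩ := hST g hg
    exact ⟨g', Subgroup.subset_closure h, h'⟩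
  | one => exact ⟨1, one_mem _, fun _ => rfl⟩
  | mul g h _ _ hg hh =>
    obtain ⟨g', h1, h2⟩ := hg
    obtain ⟨h', h3, h4⟩ := hh
    exact ⟨g' * h', mul_mem h1 h3, fun x => by simp [h2, h4]⟩
  | inv g _ hg =>
    obtain ⟨g', h1, h2⟩ := hg
    refine ⟨g'⁻¹, inv_mem h1, fun x => ?_⟩
    rw [eq_comm, Equiv.Perm.inv_eq_iff_eq, ← h2]
    simp

theorem simple_of_transitive {X : Type} [Finite X] (C : CycleSet X)
    (hind : C.Indec) (p : ℕ) (hp : p.Prime) (hcard : Nat.card X = p ^ 2)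
    (hD : SubgroupTransitive C.Dis) : IsSimpleCS C := by
  intro Y D f hsurj hf
  have : Finite Y := Finite.of_surjective f hsurj
  have hsig : ∀ x y, f (C.sigma x y) = D.sigma (f x) (f y) := hf
  have hinv : ∀ x y, f ((C.sigma x)⁻¹ y) = (D.sigma (f x))⁻¹ (f y) := fun x y => by
    rw [eq_comm, Equiv.Perm.inv_eq_iff_eq, ← hsig]
    simp
  have hG : ∀ g ∈ C.G, ∃ g' ∈ D.G, ∀ x, f (g x) = g' (f x) := by
    refine exists_induced (f := f) ?_
    rintro _ ⟨x, rfl⟩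
    exact ⟨_, ⟨f x, rfl⟩, hsig x⟩
  have hDis : ∀ g ∈ C.Dis, ∃ g' ∈ D.Dis, ∀ x, f (g x) = g' (f x) := by
    refine exists_induced (f := f) ?_
    rintro _ ⟨x, y, rfl⟩
    exact ⟨_, ⟨f x, f y, rfl⟩, fun z => by
      rw [Equiv.Perm.mul_apply, hsig, hinv, Equiv.Perm.mul_apply]⟩
  have hdvd : Nat.card Y ∣ p ^ 2 := by
    rw [← hcard]
    refine card_dvd_of_block hind hsurj fun g hg x y hxy => ?_
    obtain ⟨g', -, h⟩ := hG g hg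
    rw [h, h, hxy]
  obtain ⟨k, hk, hY⟩ := (Nat.dvd_prime_pow hp).1 hdvd
  interval_cases k
  · left; simpa using hY
  · refine absurd ?_ (not_transitive_Dis_of_prime D hp (by simpa using hY))
    intro a b
    obtain ⟨x, rfl⟩ := hsurj a
    obtain ⟨y, rfl⟩ := hsurj b
    obtain ⟨g, hg, rfl⟩ := hD x y
    obtain ⟨g', hg', h⟩ := hDis g hg
    exact ⟨g', hg', (h x).symm⟩
  · right
    exact ⟨f, hsurj.bijective_of_nat_card_le (by rw [hcard, hY]), hf⟩

theorem transitive_of_simple {X : Type} [Finite X] (C : CycleSet X)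
    (hind : C.Indec) (p : ℕ) (hp : p.Prime) (hcard : Nat.card X = p ^ 2)
    (hs : IsSimpleCS C) : SubgroupTransitive C.Dis := by
  refine (simple_dichotomy hs C.Dis C.Dis_conj le_rfl).resolve_right fun htriv => ?_
  have hX : Nonempty X := (Nat.card_pos_iff.1 (hcard ▸ pow_pos hp.pos 2)).1
  obtain ⟨x₀⟩ := hX
  set s := C.sigma x₀ with hs_def
  have hsig : ∀ x, C.sigma x = s := fun x =>
    mul_inv_eq_one.1 (htriv _ (Subgroup.subset_closure ⟨x, x₀, rfl⟩))
  -- `Dis(X)` being trivial, `G(X)` is generated by the single permutation `s`.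
  have hG : C.G = Subgroup.zpowers s := by
    rw [Subgroup.zpowers_eq_closure, G]
    congr 1
    ext g
    have : Nonempty X := ⟨x₀⟩
    simp [hsig, eq_comm]
  -- A transitive cyclic group acts regularly, so `s` has order `p ^ 2`.
  have hord : orderOf s = p ^ 2 := by
    rw [← hcard, ← Nat.card_zpowers]
    refine Nat.card_eq_of_bijective (fun g : Subgroup.zpowers s => (g : Equiv.Perm X) x₀)
      ⟨?_, ?_⟩
    · rintro ⟨g, hg⟩ ⟨h, hh⟩ hgh
      ext x
      obtain ⟨k, hk, rfl⟩ := hind x₀ x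
      rw [hG] at hk
      have hcomm : ∀ u ∈ Subgroup.zpowers s, u * k = k * u := by
        rintro _ ⟨i, rfl⟩
        obtain ⟨j, rfl⟩ := hk
        exact (Commute.refl s).zpow_zpow i j
      change g (k x₀) = h (k x₀)
      rw [← Equiv.Perm.mul_apply, hcomm g hg, ← Equiv.Perm.mul_apply, hcomm h hh]
      exact congrArg k hgh
    · intro y
      obtain ⟨k, hk, rfl⟩ := hind x₀ y
      exact ⟨⟨k, hG ▸ hk⟩, rfl⟩
  have hordp : orderOf (s ^ p) = p := by
    rw [orderOf_pow, hord, pow_two, Nat.gcd_mul_left_left, Nat.mul_div_cancel _ hp.pos]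
  have hdis : C.Dis ≤ Subgroup.zpowers (s ^ p) := fun g hg => htriv g hg ▸ one_mem _
  rcases simple_dichotomy hs (Subgroup.zpowers (s ^ p)) (fun a g hg => by
    obtain ⟨k, rfl⟩ := hg
    refine ⟨k, ?_⟩
    have : Commute s ((s ^ p) ^ k) := ((Commute.refl s).pow_right p).zpow_right k
    simp only [hsig]
    rw [this.eq, mul_inv_cancel_right]) hdis with h | h
  · have : Nonempty X := ⟨x₀⟩
    have h1 := Nat.le_of_dvd (by rw [Nat.card_zpowers, hordp]; exact hp.pos)
      (card_dvd_card_of_transitive h)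
    rw [Nat.card_zpowers, hordp, hcard] at h1
    nlinarith [hp.two_le]
  · have h1 := h _ (Subgroup.mem_zpowers _)
    rw [h1, orderOf_one] at hordp
    exact hp.one_lt.ne hordp

end CycleSet

theorem statement_4 {X : Type} [Finite X] (C : CycleSet X)
    (hnd : C.Nondeg) (hind : C.Indec)
    (p : ℕ) (hp : p.Prime) (hcard : Nat.card X = p ^ 2) :
    IsSimpleCS C ↔ SubgroupTransitive C.Dis := by
  exact ⟨transitive_of_simple C hind p hp hcard, simple_of_transitive C hind p hp hcard⟩
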